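/- arXiv:cs/0402052 — 2 statements merged into one kernel-verified Lean document; each statement's English description precedes it below -/
import Mathlib

section
/- Let α be an irrational number with convergents p_j/q_j, and let ε be a real number with 0 < ε. If m < m' are two odd indices with |α - p_m/q_m| and |α - p_{m'}/q_{m'}| both lying in the open interval (2ε, 2.122·ε), then m = m'; that is, at most one odd convergent p_m/q_m satisfies 2ε < |α - p_m/q_m| < 2.122·ε. -/
/-!
Write `D_n = α q_{n-1} - p_{n-1}` and let `f_n ∈ (0, 1)` be the fractional part of the `n`-th
complete quotient.  The recurrences for `p` and `q` give `D_{n+1} = -f_n D_n`, so two steps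
multiply `|D_n|` by `f_n f_{n+1}`.  Since `1 / f_n = a + f_{n+1}` with `a ≥ 1` an integer,
`f_n f_{n+1} = f_{n+1} / (a + f_{n+1}) < 1 / 2`.  The denominators do not decrease, so
`|α - p_m/q_m|` at least halves whenever `m` grows by two (`cfErr_add_two_le`).  The endpoints of
the window have ratio `1.061 < 2`, so two distinct odd indices cannot both fall in it.
-/

/-- The Gauss-map orbit of `α`: `cfGauss α n` is the `n`-th complete quotient
`α_n` of the continued fraction expansion of `α` (`α_0 = α`,
`α_{n+1} = 1/(α_n - ⌊α_n⌋)`). -/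
noncomputable def cfGauss (α : ℝ) : ℕ → ℝ
  | 0 => α
  | n + 1 => 1 / Int.fract (cfGauss α n)

/-- The `n`-th partial quotient `a_n` of the continued fraction expansion of `α`
(so `cfA α 0 = ⌊α⌋`). -/
noncomputable def cfA (α : ℝ) (n : ℕ) : ℤ :=
  ⌊cfGauss α n⌋

/-- `cfP α (m + 1)` is the numerator `p_m` of the `m`-th convergent of the
continued fraction expansion of `α`; `cfP α 0 = p_{-1} = 1`, `cfP α 1 = p_0 = ⌊α⌋`,
and `p_i = a_i p_{i-1} + p_{i-2}`.  (For rational `α` the values stabilize once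
the expansion terminates.) -/
noncomputable def cfP (α : ℝ) : ℕ → ℤ
  | 0 => 1
  | 1 => ⌊α⌋
  | n + 2 =>
      if Int.fract (cfGauss α n) = 0 then cfP α (n + 1)
      else cfA α (n + 1) * cfP α (n + 1) + cfP α n

/-- `cfQ α (m + 1)` is the denominator `q_m` of the `m`-th convergent of the
continued fraction expansion of `α`; `cfQ α 0 = q_{-1} = 0`, `cfQ α 1 = q_0 = 1`,
and `q_i = a_i q_{i-1} + q_{i-2}`. -/
noncomputable def cfQ (α : ℝ) : ℕ → ℤ
  | 0 => 0
  | 1 => 1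
  | n + 2 =>
      if Int.fract (cfGauss α n) = 0 then cfQ α (n + 1)
      else cfA α (n + 1) * cfQ α (n + 1) + cfQ α n

theorem irrational_cfGauss {α : ℝ} (h : Irrational α) (n : ℕ) : Irrational (cfGauss α n) := by
  induction n with
  | zero => exact h
  | succ n ih =>
    have hf : Irrational (Int.fract (cfGauss α n)) := ih.sub_intCast _
    simpa [cfGauss] using hf.inv

theorem fract_cfGauss_pos {α : ℝ} (h : Irrational α) (n : ℕ) :
    0 < Int.fract (cfGauss α n) := by
  refine lt_of_le_of_ne (Int.fract_nonneg _) fun h0 => ?_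
  have hf : Irrational (Int.fract (cfGauss α n)) := (irrational_cfGauss h n).sub_intCast _
  exact hf.ne_zero h0.symm

theorem one_le_cfA_succ {α : ℝ} (h : Irrational α) (n : ℕ) : 1 ≤ cfA α (n + 1) := by
  have h0 := fract_cfGauss_pos h n
  have h1 := Int.fract_lt_one (cfGauss α n)
  rw [cfA, Int.le_floor, cfGauss, le_div_iff₀ h0]
  push_cast
  linarith

theorem cfP_rec {α : ℝ} (h : Irrational α) (n : ℕ) :
    cfP α (n + 2) = cfA α (n + 1) * cfP α (n + 1) + cfP α n := by
  rw [cfP, if_neg (fract_cfGauss_pos h n).ne']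

theorem cfQ_rec {α : ℝ} (h : Irrational α) (n : ℕ) :
    cfQ α (n + 2) = cfA α (n + 1) * cfQ α (n + 1) + cfQ α n := by
  rw [cfQ, if_neg (fract_cfGauss_pos h n).ne']

theorem cfQ_nonneg_and_succ_pos {α : ℝ} (h : Irrational α) (n : ℕ) :
    0 ≤ cfQ α n ∧ 0 < cfQ α (n + 1) := by
  induction n with
  | zero => simp [cfQ]
  | succ n ih =>
    refine ⟨ih.2.le, ?_⟩
    rw [cfQ_rec h n]
    have := mul_pos (one_le_cfA_succ h n) ih.2
    linarith [ih.1]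

/-- The splitting `1 / fract α_n = a_{n+1} + fract α_{n+1}`, cleared of denominators. -/
theorem one_eq_cfA_add_fract_mul {α : ℝ} (h : Irrational α) (n : ℕ) :
    1 = (cfA α (n + 1) + Int.fract (cfGauss α (n + 1))) * Int.fract (cfGauss α n) := by
  have h0 := (fract_cfGauss_pos h n).ne'
  rw [cfA, Int.floor_add_fract, cfGauss, one_div, inv_mul_cancel₀ h0]

/-- The linear form `α q - p` is multiplied by `-fract α_n` at each step. -/
theorem cfQ_mul_sub_cfP_succ {α : ℝ} (h : Irrational α) (n : ℕ) :
    α * cfQ α (n + 1) - cfP α (n + 1)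
      = -Int.fract (cfGauss α n) * (α * cfQ α n - cfP α n) := by
  induction n with
  | zero => simp [cfP, cfQ, cfGauss, Int.self_sub_floor]
  | succ n ih =>
    rw [cfQ_rec h n, cfP_rec h n]
    push_cast
    have h1 := one_eq_cfA_add_fract_mul h n
    linear_combination (cfA α (n + 1) + Int.fract (cfGauss α (n + 1))) * ih
      + (α * cfQ α n - cfP α n) * h1

/-- The approximation error `|α - p_{n-1}/q_{n-1}|`, with the index shift of `cfP` and `cfQ`. -/
noncomputable def cfErr (α : ℝ) (n : ℕ) : ℝ :=
  |α - (cfP α n : ℝ) / (cfQ α n : ℝ)|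

theorem cfErr_eq {α : ℝ} (h : Irrational α) (n : ℕ) :
    cfErr α (n + 1) = |α * cfQ α (n + 1) - cfP α (n + 1)| / cfQ α (n + 1) := by
  have hq : (0 : ℝ) < cfQ α (n + 1) := by exact_mod_cast (cfQ_nonneg_and_succ_pos h n).2
  rw [cfErr, ← abs_of_pos hq, ← abs_div, abs_of_pos hq, sub_div, mul_div_cancel_right₀ _ hq.ne']

theorem cfErr_add_two_le {α : ℝ} (h : Irrational α) (n : ℕ) :
    cfErr α (n + 3) ≤ cfErr α (n + 1) / 2 := by
  have hq : (0 : ℝ) < cfQ α (n + 1) := by exact_mod_cast (cfQ_nonneg_and_succ_pos h n).2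
  have hqq : (cfQ α (n + 1) : ℝ) ≤ cfQ α (n + 3) := by
    have h2 := (cfQ_nonneg_and_succ_pos h (n + 1)).2
    have := mul_pos (one_le_cfA_succ h (n + 1)) h2
    have h3 := cfQ_rec h (n + 1)
    exact_mod_cast (by linarith : cfQ α (n + 1) ≤ cfQ α (n + 3))
  have hf := fract_cfGauss_pos h (n + 1)
  have hg := fract_cfGauss_pos h (n + 2)
  have hg1 := Int.fract_lt_one (cfGauss α (n + 2))
  have ha : (1 : ℝ) ≤ cfA α (n + 2) := by exact_mod_cast one_le_cfA_succ h (n + 1)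
  have hprod : Int.fract (cfGauss α (n + 2)) * Int.fract (cfGauss α (n + 1)) ≤ 1 / 2 := by
    have h1 := one_eq_cfA_add_fract_mul h (n + 1)
    nlinarith [mul_le_mul_of_nonneg_right (hg1.le.trans ha) hf.le]
  have hD : |α * cfQ α (n + 3) - cfP α (n + 3)| ≤ |α * cfQ α (n + 1) - cfP α (n + 1)| / 2 := by
    rw [cfQ_mul_sub_cfP_succ h (n + 2), cfQ_mul_sub_cfP_succ h (n + 1), ← mul_assoc, neg_mul_neg,
      abs_mul, abs_of_pos (mul_pos hg hf)]
    nlinarith [mul_le_mul_of_nonneg_right hprod (abs_nonneg (α * cfQ α (n + 1) - cfP α (n + 1)))]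
  rw [cfErr_eq h (n + 2), cfErr_eq h n, div_right_comm]
  exact div_le_div₀ (by positivity) hD hq hqq

theorem cfErr_add_two_mul_le {α : ℝ} (h : Irrational α) (n k : ℕ) :
    cfErr α (n + 2 * (k + 1) + 1) ≤ cfErr α (n + 1) / 2 := by
  induction k with
  | zero => exact cfErr_add_two_le h n
  | succ k ih =>
    have h1 := cfErr_add_two_le h (n + 2 * (k + 1))
    have h0 : 0 ≤ cfErr α (n + 2 * (k + 1) + 1) := abs_nonneg _
    have e : n + 2 * (k + 1 + 1) + 1 = n + 2 * (k + 1) + 3 := by ring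
    rw [e]
    linarith

theorem cfErr_le_half_of_odd_lt {α : ℝ} (h : Irrational α) {m m' : ℕ} (hm : Odd m)
    (hm' : Odd m') (hlt : m < m') : cfErr α (m' + 1) ≤ cfErr α (m + 1) / 2 := by
  obtain ⟨a, rfl⟩ := hm
  obtain ⟨b, rfl⟩ := hm'
  obtain ⟨k, rfl⟩ : ∃ k, b = a + (k + 1) := ⟨b - a - 1, by omega⟩
  have e : 2 * (a + (k + 1)) + 1 = 2 * a + 1 + 2 * (k + 1) := by ring
  rw [e]
  exact cfErr_add_two_mul_le h _ k

/-- For irrational `α` and `ε > 0`, at most one odd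
convergent `p_m/q_m` satisfies `2ε < |α - p_m/q_m| < 2.122 ε`: if `m`, `m'` are
odd indices whose convergents both approximate `α` within the open interval
`(2ε, 2.122ε)`, then `m = m'`.  (Here `p_m = cfP α (m + 1)`.) -/
theorem at_most_one_odd_convergent_in_window (α : ℝ) (hirr : Irrational α)
    (ε : ℝ) (hε : 0 < ε) (m m' : ℕ) (hm : Odd m) (hm' : Odd m')
    (h1 : 2 * ε < |α - (cfP α (m + 1) : ℝ) / (cfQ α (m + 1) : ℝ)| ∧
          |α - (cfP α (m + 1) : ℝ) / (cfQ α (m + 1) : ℝ)| < 2.122 * ε)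
    (h2 : 2 * ε < |α - (cfP α (m' + 1) : ℝ) / (cfQ α (m' + 1) : ℝ)| ∧
          |α - (cfP α (m' + 1) : ℝ) / (cfQ α (m' + 1) : ℝ)| < 2.122 * ε) :
    m = m' := by
  change 2 * ε < cfErr α (m + 1) ∧ cfErr α (m + 1) < 2.122 * ε at h1
  change 2 * ε < cfErr α (m' + 1) ∧ cfErr α (m' + 1) < 2.122 * ε at h2
  rcases lt_trichotomy m m' with hlt | heq | hgt
  · have := cfErr_le_half_of_odd_lt hirr hm hm' hlt
    linarith [h1.2, h2.1]
  · exact heq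
  · have := cfErr_le_half_of_odd_lt hirr hm' hm hgt
    linarith [h2.2, h1.1]
end

section
/- In the RSA setting with n > 10⁸, let p_j/q_j be the convergents of e/n, let m be the largest odd integer with p_m/q_m > e/n + 2.122·e/(n√n), and set D = d/n^{1/4}. If p_{m+2}/q_{m+2} < k/d, then either there exist positive integers r, s with rs < 4.244·D², k = r·p_{m+1} + s·p_m and d = r·q_{m+1} + s·q_m, or there exist positive integers s, t with st < 4.244·D², k = s·p_{m+2} - t·p_{m+1} and d = s·q_{m+2} - t·q_{m+1}. -/
theorem cf_fract_succ {α : ℝ} {n : ℕ} (h : Int.fract (cfGauss α n) = 0) :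
    Int.fract (cfGauss α (n + 1)) = 0 := by
  simp [cfGauss, h]

theorem cf_one_le_A {α : ℝ} {n : ℕ} (h : Int.fract (cfGauss α n) ≠ 0) :
    1 ≤ cfA α (n + 1) := by
  have h0 : 0 < Int.fract (cfGauss α n) := lt_of_le_of_ne (Int.fract_nonneg _) (Ne.symm h)
  rw [cfA, Int.le_floor, cfGauss, le_div_iff₀ h0]
  have := (Int.fract_lt_one (cfGauss α n)).le
  push_cast
  linarith

theorem cf_P_step {α : ℝ} {n : ℕ} (h : Int.fract (cfGauss α n) ≠ 0) :
    cfP α (n + 2) = cfA α (n + 1) * cfP α (n + 1) + cfP α n := by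
  rw [cfP, if_neg h]

theorem cf_Q_step {α : ℝ} {n : ℕ} (h : Int.fract (cfGauss α n) ≠ 0) :
    cfQ α (n + 2) = cfA α (n + 1) * cfQ α (n + 1) + cfQ α n := by
  rw [cfQ, if_neg h]

theorem cf_Q_pos (α : ℝ) (n : ℕ) : 0 ≤ cfQ α n ∧ 1 ≤ cfQ α (n + 1) := by
  induction n with
  | zero => simp [cfQ]
  | succ n ih =>
    refine ⟨by linarith [ih.2], ?_⟩
    rw [cfQ]
    split_ifs with h
    · exact ih.2
    · have := cf_one_le_A h
      nlinarith [ih.1, ih.2]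

/-- The error `p_j - α q_j` is multiplied by minus the fractional part of the complete quotient at
each step, and vanishes once the expansion has terminated. -/
theorem cf_error (α : ℝ) (n : ℕ) :
    (Int.fract (cfGauss α n) = 0 ∧ (cfP α (n + 1) : ℝ) - α * cfQ α (n + 1) = 0) ∨
    (Int.fract (cfGauss α n) ≠ 0 ∧ (cfP α (n + 1) : ℝ) - α * cfQ α (n + 1) =
      -Int.fract (cfGauss α n) * (cfP α n - α * cfQ α n)) := by
  induction n with
  | zero =>
    have h1 := Int.self_sub_floor α
    by_cases h : Int.fract α = 0
    · left
      refine ⟨h, ?_⟩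
      simp only [cfP, cfQ]
      push_cast
      linarith
    · right
      refine ⟨h, ?_⟩
      simp only [cfP, cfQ, cfGauss]
      push_cast
      linarith
  | succ n ih =>
    rcases ih with ⟨hT, hE⟩ | ⟨hT, hE⟩
    · left
      refine ⟨cf_fract_succ hT, ?_⟩
      rw [cfP, cfQ, if_pos hT, if_pos hT]
      exact hE
    · have hx : cfGauss α (n + 1) * Int.fract (cfGauss α n) = 1 := by
        rw [cfGauss]
        field_simp
      have hfl : cfGauss α (n + 1) = cfA α (n + 1) + Int.fract (cfGauss α (n + 1)) :=
        (Int.floor_add_fract _).symm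
      have key : (cfP α (n + 1 + 1) : ℝ) - α * cfQ α (n + 1 + 1) =
          -Int.fract (cfGauss α (n + 1)) * (cfP α (n + 1) - α * cfQ α (n + 1)) := by
        rw [cfP, cfQ, if_neg hT, if_neg hT]
        push_cast
        linear_combination cfGauss α (n + 1) * hE - (cfP α n - α * cfQ α n) * hx
          - (cfP α (n + 1) - α * cfQ α (n + 1)) * hfl
      by_cases h : Int.fract (cfGauss α (n + 1)) = 0
      · left
        refine ⟨h, ?_⟩
        rw [key, h]
        ring
      · exact Or.inr ⟨h, key⟩

theorem cf_error_sign (α : ℝ) (n : ℕ) :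
    0 ≤ (-1 : ℝ) ^ n * (cfP α n - α * cfQ α n) := by
  induction n with
  | zero => simp [cfP, cfQ]
  | succ n ih =>
    rcases cf_error α n with ⟨_, hE⟩ | ⟨_, hE⟩
    · rw [hE, mul_zero]
    · rw [hE, pow_succ]
      have := mul_nonneg (Int.fract_nonneg (cfGauss α n)) ih
      linarith

/-- Non-termination at step `n` is what makes the determinant at `n + 1` still genuine; past the end
the stabilized convergents have determinant `0`. -/
theorem cf_det {α : ℝ} {n : ℕ} (h : Int.fract (cfGauss α n) ≠ 0) :
    cfP α (n + 2) * cfQ α (n + 1) - cfP α (n + 1) * cfQ α (n + 2) = (-1) ^ n := by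
  induction n with
  | zero =>
    rw [cf_P_step h, cf_Q_step h]
    simp only [cfP, cfQ]
    ring
  | succ n ih =>
    have h' : Int.fract (cfGauss α n) ≠ 0 := fun h0 => h (cf_fract_succ h0)
    rw [cf_P_step h, cf_Q_step h, pow_succ, ← ih h']
    ring

/-- The error vanishes from termination on, so a convergent strictly above `α` is followed
by a genuine next convergent. -/
theorem cf_not_terminated {α : ℝ} {n : ℕ}
    (h : α < (cfP α (n + 1) : ℝ) / cfQ α (n + 1)) : Int.fract (cfGauss α n) ≠ 0 := by
  intro h0
  rcases cf_error α n with ⟨_, hE⟩ | ⟨hT, _⟩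
  · have hq : (0 : ℝ) < cfQ α (n + 1) := by
      have := (cf_Q_pos α n).2
      exact_mod_cast this
    rw [lt_div_iff₀ hq] at h
    linarith
  · exact hT h0

/-- The constant `2.122` exceeds `3/√2 ≈ 2.1213` by enough to absorb the passage from `φ` to `n`
when `w = √n > 10⁴`. -/
theorem rsa_upper {p q n e d k w : ℝ} (hpq : p < q) (hqp : q < 2 * p)
    (hn : n = p * q) (hw : 10 ^ 4 < w) (hwn : w ^ 2 = n) (he : 0 < e) (hd : 0 < d)
    (hkey : e * d = k * ((p - 1) * (q - 1)) + 1) :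
    k / d < e / n + 2.122 * e / (n * w) := by
  have hw0 : 0 < w := by linarith
  have hn0 : 0 < n := by rw [← hwn]; positivity
  have hS : p + q < 2.1214 * w := by
    apply lt_of_pow_lt_pow_left₀ 2 (by positivity)
    have h1 : 0 < (2 * p - q) * (2 * q - p) := mul_pos (by linarith) (by linarith)
    nlinarith
  have hphi : (p - 1) * (q - 1) = n - (p + q - 1) := by rw [hn]; ring
  have hphi0 : 0 < n - (p + q - 1) := by nlinarith
  rw [hphi] at hkey
  have h1 : k / d < e / (n - (p + q - 1)) := by
    rw [div_lt_div_iff₀ hd hphi0]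
    linarith
  have h2 : e / (n - (p + q - 1)) ≤ e / n + 2.122 * e / (n * w) := by
    have h3 : e / n + 2.122 * e / (n * w) = e * (w + 2.122) / (n * w) := by
      field_simp
    rw [h3, div_le_div_iff₀ hphi0 (by positivity), mul_assoc]
    apply mul_le_mul_of_nonneg_left _ he.le
    have h4 : (p + q - 1) * (w + 2.122) ≤ 2.1214 * w * (w + 2.122) :=
      mul_le_mul_of_nonneg_right (by linarith) (by linarith)
    nlinarith
  linarith

/-- The trade-off between the two representations: with `r + t = s a`, the smaller of `r` and `t`
gives the small product.  Here `Q₁, Q₂` are consecutive denominators and the next one is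
`a Q₂ + Q₁`. -/
theorem product_tradeoff {r s t a Q₁ Q₂ d δ : ℝ} (hr : 0 < r) (hs : 0 < s) (ht : 0 < t)
    (ha : 0 < a) (hQ₁ : 0 < Q₁) (hQ₂ : 0 < Q₂) (hd : d = r * Q₂ + s * Q₁) (hta : r + t = s * a)
    (hδ : t < δ * d * (a * Q₂ + Q₁)) :
    r * s < 2 * δ * d ^ 2 ∨ s * t < 2 * δ * d ^ 2 := by
  have hQ₃ : 0 < a * Q₂ + Q₁ := by positivity
  have hd0 : 0 < d := by rw [hd]; positivity
  have hdt : 2 * d * t < 2 * δ * d ^ 2 * (a * Q₂ + Q₁) := by nlinarith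
  rcases le_total r t with h | h
  · left
    refine lt_of_mul_lt_mul_right (lt_of_le_of_lt ?_ hdt) hQ₃.le
    have h1 : s * a ≤ 2 * t := by linarith
    have h2 : d * (s * a) ≤ d * (2 * t) := mul_le_mul_of_nonneg_left h1 hd0.le
    have h3 : s * Q₁ * r ≤ s * Q₁ * (s * a) :=
      mul_le_mul_of_nonneg_left (by linarith) (by positivity)
    rw [hd] at h2 ⊢
    nlinarith
  · right
    refine lt_of_mul_lt_mul_right (lt_of_le_of_lt ?_ hdt) hQ₃.le
    have h1 : s * a ≤ 2 * r := by linarith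
    have h2 : s * (a * Q₂ + Q₁) ≤ 2 * d := by
      rw [hd]
      nlinarith [mul_le_mul_of_nonneg_right h1 hQ₂.le, mul_pos hs hQ₁]
    nlinarith [mul_le_mul_of_nonneg_right h2 ht.le]

/-- In the RSA setting with `n > 10⁸`, let `p_j/q_j` be the
convergents of `e/n`, let `m` be the largest odd integer with
`p_m/q_m > e/n + 2.122 e/(n√n)`, and `D = d/n^{1/4}`.  If
`p_{m+2}/q_{m+2} < k/d`, then either `k = r p_{m+1} + s p_m`,
`d = r q_{m+1} + s q_m` for positive integers `r`, `s` with `rs < 4.244 D²`, or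
`k = s p_{m+2} - t p_{m+1}`, `d = s q_{m+2} - t q_{m+1}` for positive integers
`s`, `t` with `st < 4.244 D²`.
(Here `p_m = cfP (e/n) (m + 1)`, `p_{m+1} = cfP (e/n) (m + 2)`,
`p_{m+2} = cfP (e/n) (m + 3)`.) -/
theorem new_variant_representation (p q n e d k : ℕ) (hp : p.Prime) (hq : q.Prime)
    (hpq : p < q) (hqp : q < 2 * p) (hn : n = p * q) (hbig : n > 10 ^ 8)
    (he : 0 < e) (hd : 0 < d) (hk : 0 < k) (hen : e < n)
    (hkd : Nat.Coprime k d)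
    (hkey : e * d = k * ((p - 1) * (q - 1)) + 1)
    (m : ℕ) (hmodd : Odd m)
    (hm : (cfP ((e : ℝ) / n) (m + 1) : ℝ) / (cfQ ((e : ℝ) / n) (m + 1) : ℝ) > (e : ℝ) / n + 2.122 * e / ((n : ℝ) * Real.sqrt n))
    (hmax : ∀ m' : ℕ, Odd m' → ((cfP ((e : ℝ) / n) (m' + 1) : ℝ) / (cfQ ((e : ℝ) / n) (m' + 1) : ℝ) > (e : ℝ) / n + 2.122 * e / ((n : ℝ) * Real.sqrt n)) → m' ≤ m)
    (D : ℝ) (hD : D = (d : ℝ) / (n : ℝ) ^ ((1 : ℝ) / 4))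
    (hcase : (cfP ((e : ℝ) / n) (m + 3) : ℝ) / (cfQ ((e : ℝ) / n) (m + 3) : ℝ) < (k : ℝ) / d) :
    (∃ r s : ℤ, 0 < r ∧ 0 < s ∧ (r : ℝ) * s < 4.244 * D ^ 2 ∧
        (k : ℤ) = r * cfP ((e : ℝ) / n) (m + 2) + s * cfP ((e : ℝ) / n) (m + 1) ∧
        (d : ℤ) = r * cfQ ((e : ℝ) / n) (m + 2) + s * cfQ ((e : ℝ) / n) (m + 1)) ∨
    (∃ s t : ℤ, 0 < s ∧ 0 < t ∧ (s : ℝ) * t < 4.244 * D ^ 2 ∧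
        (k : ℤ) = s * cfP ((e : ℝ) / n) (m + 3) - t * cfP ((e : ℝ) / n) (m + 2) ∧
        (d : ℤ) = s * cfQ ((e : ℝ) / n) (m + 3) - t * cfQ ((e : ℝ) / n) (m + 2)) := by
  set α : ℝ := (e : ℝ) / n with hα
  set w : ℝ := Real.sqrt n with hwdef
  have hbigR : (10 : ℝ) ^ 8 < n := by exact_mod_cast hbig
  have hn0 : (0 : ℝ) < n := by linarith
  have hwn : w ^ 2 = n := Real.sq_sqrt hn0.le
  have hw : (10 : ℝ) ^ 4 < w := by
    apply Real.lt_sqrt_of_sq_lt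
    linarith
  have hw0 : 0 < w := by linarith
  have hdR : (0 : ℝ) < d := by exact_mod_cast hd
  have heR : (0 : ℝ) < e := by exact_mod_cast he
  have hupper : (k : ℝ) / d < α + 2.122 * e / (n * w) := by
    apply rsa_upper (p := p) (q := q) _ _ _ hw hwn heR hdR
    · have h := congrArg (Nat.cast : ℕ → ℝ) hkey
      push_cast [Nat.cast_sub hp.one_le, Nat.cast_sub hq.one_le] at h
      exact h
    · exact_mod_cast hpq
    · exact_mod_cast hqp
    · exact_mod_cast hn
  set δ : ℝ := 2.122 / w with hδdef
  have hδ0 : 0 < δ := by positivity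
  have hεpos : 0 < 2.122 * (e : ℝ) / (n * w) := by positivity
  have hεδ : 2.122 * (e : ℝ) / (n * w) < δ := by
    rw [hδdef, div_lt_div_iff₀ (by positivity) hw0]
    have : (e : ℝ) < n := by exact_mod_cast hen
    have := mul_lt_mul_of_pos_right this hw0
    linarith
  have hkδ : (k : ℝ) - α * d < δ * d := by
    have h : (k : ℝ) / d < α + δ := by linarith
    rw [div_lt_iff₀ hdR] at h
    linarith
  have hDδ : 4.244 * D ^ 2 = 2 * δ * d ^ 2 := by
    have h4 : ((n : ℝ) ^ ((1 : ℝ) / 4)) ^ 2 = w := by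
      rw [hwdef, Real.sqrt_eq_rpow, ← Real.rpow_natCast, ← Real.rpow_mul hn0.le]
      norm_num
    rw [hD, div_pow, h4, hδdef]
    ring
  rw [hDδ]
  have hT : Int.fract (cfGauss α m) ≠ 0 := cf_not_terminated (by linarith)
  -- `m` is odd, so the determinant is `-1`.
  have hdet : cfP α (m + 1) * cfQ α (m + 2) - cfP α (m + 2) * cfQ α (m + 1) = 1 := by
    have h := cf_det hT
    rw [hmodd.neg_one_pow] at h
    linarith
  have hE2 : (cfP α (m + 2) : ℝ) - α * cfQ α (m + 2) ≤ 0 := by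
    have h := cf_error_sign α (m + 2)
    rw [pow_add, hmodd.neg_one_pow] at h
    linarith
  have hE3 : 0 ≤ (cfP α (m + 3) : ℝ) - α * cfQ α (m + 3) := by
    have h := cf_error_sign α (m + 3)
    rw [pow_add, hmodd.neg_one_pow] at h
    linarith
  have hQ1 : (0 : ℝ) < cfQ α (m + 1) := by exact_mod_cast (cf_Q_pos α m).2
  have hQ2 : (0 : ℝ) < cfQ α (m + 2) := by exact_mod_cast (cf_Q_pos α (m + 1)).2
  have hQ3 : (0 : ℝ) < cfQ α (m + 3) := by exact_mod_cast (cf_Q_pos α (m + 2)).2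
  have hkα : 0 < (k : ℝ) - α * d := by
    have h1 : α ≤ (cfP α (m + 3) : ℝ) / cfQ α (m + 3) := by
      rw [le_div_iff₀ hQ3]
      linarith
    have h2 : α < (k : ℝ) / d := by linarith
    rw [lt_div_iff₀ hdR] at h2
    linarith
  -- Cramer's rule for `(k, d) = r (p_{m+1}, q_{m+1}) + s (p_m, q_m)`.
  obtain ⟨r, hr⟩ : ∃ r : ℤ, r = d * cfP α (m + 1) - k * cfQ α (m + 1) := ⟨_, rfl⟩
  obtain ⟨s, hs⟩ : ∃ s : ℤ, s = k * cfQ α (m + 2) - d * cfP α (m + 2) := ⟨_, rfl⟩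
  have hkrep : (k : ℤ) = r * cfP α (m + 2) + s * cfP α (m + 1) := by
    rw [hr, hs]
    linear_combination (-(k : ℤ)) * hdet
  have hdrep : (d : ℤ) = r * cfQ α (m + 2) + s * cfQ α (m + 1) := by
    rw [hr, hs]
    linear_combination (-(d : ℤ)) * hdet
  have hrR : (r : ℝ) = d * cfP α (m + 1) - k * cfQ α (m + 1) := by rw [hr]; push_cast; ring
  have hsR : (s : ℝ) = k * cfQ α (m + 2) - d * cfP α (m + 2) := by rw [hs]; push_cast; ring
  have hdR' : (d : ℝ) = r * cfQ α (m + 2) + s * cfQ α (m + 1) := by exact_mod_cast hdrep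
  have hr0 : (0 : ℝ) < r := by
    have h : (k : ℝ) / d < (cfP α (m + 1) : ℝ) / cfQ α (m + 1) := by linarith
    rw [div_lt_div_iff₀ hdR hQ1] at h
    linarith
  have hs0 : (0 : ℝ) < s := by
    rw [hsR]
    linarith [mul_pos hkα hQ2, mul_nonpos_of_nonneg_of_nonpos hdR.le hE2]
  have hr0' : 0 < r := by exact_mod_cast hr0
  have hs0' : 0 < s := by exact_mod_cast hs0
  by_cases hT1 : Int.fract (cfGauss α (m + 1)) = 0
  · left
    refine ⟨r, s, hr0', hs0', ?_, hkrep, hdrep⟩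
    have hE : (cfP α (m + 2) : ℝ) - α * cfQ α (m + 2) = 0 := by
      rcases cf_error α (m + 1) with h | h
      · exact h.2
      · exact absurd hT1 h.1
    have hsδ : (s : ℝ) < δ * d * cfQ α (m + 2) := by
      rw [hsR]
      linarith [mul_lt_mul_of_pos_right hkδ hQ2, congrArg (fun x : ℝ => (d : ℝ) * x) hE]
    have h1 : (r : ℝ) * s < r * (δ * d * cfQ α (m + 2)) := mul_lt_mul_of_pos_left hsδ hr0
    have h2 : (r : ℝ) * cfQ α (m + 2) < d := by
      rw [hdR']
      linarith [mul_pos hs0 hQ1]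
    have h3 := mul_lt_mul_of_pos_left h2 (mul_pos hδ0 hdR)
    linarith [mul_pos hδ0 (mul_pos hdR hdR)]
  · have hP3 : cfP α (m + 3) = cfA α (m + 2) * cfP α (m + 2) + cfP α (m + 1) :=
      cf_P_step hT1
    have hQ3' : cfQ α (m + 3) = cfA α (m + 2) * cfQ α (m + 2) + cfQ α (m + 1) :=
      cf_Q_step hT1
    have ha : (0 : ℝ) < cfA α (m + 2) := by exact_mod_cast cf_one_le_A hT1
    have hQ3R : (cfQ α (m + 3) : ℝ) = cfA α (m + 2) * cfQ α (m + 2) + cfQ α (m + 1) := by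
      exact_mod_cast hQ3'
    have hP3R : (cfP α (m + 3) : ℝ) = cfA α (m + 2) * cfP α (m + 2) + cfP α (m + 1) := by
      exact_mod_cast hP3
    obtain ⟨t, ht⟩ : ∃ t : ℤ, t = s * cfA α (m + 2) - r := ⟨_, rfl⟩
    have htR : (t : ℝ) = s * cfA α (m + 2) - r := by rw [ht]; push_cast; ring
    have htR' : (t : ℝ) = k * cfQ α (m + 3) - d * cfP α (m + 3) := by
      rw [htR, hrR, hsR, hQ3R, hP3R]
      ring
    have ht0 : (0 : ℝ) < t := by
      rw [div_lt_div_iff₀ hQ3 hdR] at hcase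
      linarith
    have htδ : (t : ℝ) < δ * d * (cfA α (m + 2) * cfQ α (m + 2) + cfQ α (m + 1)) := by
      rw [← hQ3R, htR']
      linarith [mul_lt_mul_of_pos_right hkδ hQ3, mul_nonneg hdR.le hE3]
    rcases product_tradeoff hr0 hs0 ht0 ha hQ1 hQ2 hdR' (by linarith) htδ with h | h
    · exact Or.inl ⟨r, s, hr0', hs0', h, hkrep, hdrep⟩
    · refine Or.inr ⟨s, t, hs0', by exact_mod_cast ht0, h, ?_, ?_⟩
      · rw [hP3, ht]
        linear_combination hkrep
      · rw [hQ3', ht]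
        linear_combination hdrep
end
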